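/- For every integer T ≥ 2 and every real ρ, trace(Q · Φ(ρ)) = -(1/T) · Σ_{t=1}^{T-1} (T-t)·ρ^{t-1} = -(T-1)·ξ'(ρ). -/

import Mathlib

/-!
The diagonal of `Φ(ρ)` vanishes, so `tr (Q Φ(ρ))` is `-1/T` times the sum of all entries of `Φ(ρ)`.
Row `i` (counted from `0`) contributes `1 + ρ + ⋯ + ρ^(i-1)`, and `ρ^k` occurs on the
`(k+1)`-st subdiagonal, which has `T - (k+1)` entries; this gives the first formula
(`sum_sum_pow`, `sum_Phi`, `trace_Qmat_mul_Phi`). The second one follows by differentiating `ξ`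
termwise (`hasDerivAt_xi`).
-/

open Finset Matrix

/-- The Lancaster bias-correction polynomial
`ξ(r) = (1/(T(T-1))) · Σ_{t=1}^{T-1} ((T-t)/t) · r^t`. -/
noncomputable def xi (T : ℕ) (r : ℝ) : ℝ :=
  (1 / ((T : ℝ) * ((T : ℝ) - 1))) *
    ∑ t ∈ Finset.Icc 1 (T - 1), (((T : ℝ) - (t : ℝ)) / (t : ℝ)) * r ^ t

/-- The `T×T` centering projection matrix `Q = I_T - (1/T)·ι ιᵀ`, with entries
`δ_{ij} - 1/T`. -/
noncomputable def Qmat (T : ℕ) : Matrix (Fin T) (Fin T) ℝ :=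
  fun i j => (if i = j then 1 else 0) - 1 / (T : ℝ)

/-- The `T×T` matrix `Φ(ρ)` whose `(i,j)` entry is `ρ^{i-j-1}` when `i > j` and
`0` otherwise. -/
noncomputable def Phi (T : ℕ) (ρ : ℝ) : Matrix (Fin T) (Fin T) ℝ :=
  fun i j => if (j : ℕ) < (i : ℕ) then ρ ^ ((i : ℕ) - (j : ℕ) - 1) else 0

theorem sum_sum_pow (ρ : ℝ) (n : ℕ) :
    ∑ i ∈ range n, ∑ k ∈ range i, ρ ^ k
      = ∑ k ∈ range n, ((n : ℝ) - ((k + 1 : ℕ) : ℝ)) * ρ ^ k := by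
  induction n with
  | zero => simp
  | succ n ih =>
    rw [sum_range_succ, ih, sum_range_succ, ← sum_add_distrib]
    simp only [sub_self, zero_mul, add_zero]
    refine sum_congr rfl fun k _ => ?_
    push_cast
    ring

theorem sum_Phi_row (T : ℕ) (ρ : ℝ) (i : Fin T) :
    ∑ j, Phi T ρ i j = ∑ k ∈ range (i : ℕ), ρ ^ k := by
  unfold Phi
  rw [Fin.sum_univ_eq_sum_range
    (fun j => if j < (i : ℕ) then ρ ^ ((i : ℕ) - j - 1) else 0) T, ← sum_filter]
  have hf : (range T).filter (fun j => j < (i : ℕ)) = range (i : ℕ) := by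
    ext j
    have := i.isLt
    simp only [mem_filter, mem_range]
    omega
  rw [hf, ← sum_range_reflect]
  refine sum_congr rfl fun j hj => ?_
  have := mem_range.mp hj
  congr 1
  omega

theorem sum_Phi (T : ℕ) (hT : 1 ≤ T) (ρ : ℝ) :
    ∑ i, ∑ j, Phi T ρ i j
      = ∑ t ∈ Icc 1 (T - 1), ((T : ℝ) - (t : ℝ)) * ρ ^ (t - 1) := by
  simp_rw [sum_Phi_row]
  rw [Fin.sum_univ_eq_sum_range (fun i => ∑ k ∈ range i, ρ ^ k) T, sum_sum_pow]
  obtain ⟨n, rfl⟩ : ∃ n, T = n + 1 := ⟨T - 1, by omega⟩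
  -- The last coefficient is zero, which matches the upper limit `T - 1` on the right.
  rw [sum_range_succ, sub_self, zero_mul, add_zero, Nat.add_sub_cancel,
    show Icc 1 n = Ico 1 (n + 1) from rfl, sum_Ico_eq_sum_range]
  simp [add_comm]

theorem trace_Qmat_mul_Phi (T : ℕ) (ρ : ℝ) :
    Matrix.trace (Qmat T * Phi T ρ) = -(1 / (T : ℝ)) * ∑ i, ∑ j, Phi T ρ i j := by
  have hd : ∀ i, Phi T ρ i i = 0 := fun i => by simp [Phi]
  simp only [Matrix.trace, Matrix.diag, Matrix.mul_apply, Qmat, sub_mul, ite_mul, one_mul,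
    zero_mul, sum_sub_distrib, sum_ite_eq, mem_univ, if_true, hd, zero_sub,
    ← mul_sum, sum_neg_distrib]
  rw [sum_comm, neg_mul]

theorem hasDerivAt_xi (T : ℕ) (ρ : ℝ) :
    HasDerivAt (xi T) ((1 / ((T : ℝ) * ((T : ℝ) - 1))) *
      ∑ t ∈ Icc 1 (T - 1), ((T : ℝ) - (t : ℝ)) * ρ ^ (t - 1)) ρ := by
  unfold xi
  refine HasDerivAt.const_mul _ (HasDerivAt.fun_sum fun t ht => ?_)
  have ht0 : (t : ℝ) ≠ 0 := by
    have := (mem_Icc.mp ht).1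
    exact_mod_cast (by omega : t ≠ 0)
  have h := (hasDerivAt_pow t ρ).const_mul (((T : ℝ) - (t : ℝ)) / (t : ℝ))
  rwa [← mul_assoc, div_mul_cancel₀ _ ht0] at h

/-- For every integer `T ≥ 2` and every real `ρ`,
`trace(Q · Φ(ρ)) = -(1/T) · Σ_{t=1}^{T-1} (T-t)·ρ^{t-1} = -(T-1)·ξ'(ρ)`. -/
theorem stmt_7 (T : ℕ) (hT : 2 ≤ T) (ρ : ℝ) :
    Matrix.trace (Qmat T * Phi T ρ)
        = -(1 / (T : ℝ)) * ∑ t ∈ Finset.Icc 1 (T - 1), ((T : ℝ) - (t : ℝ)) * ρ ^ (t - 1)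
    ∧ Matrix.trace (Qmat T * Phi T ρ) = -(((T : ℝ) - 1) * deriv (xi T) ρ) := by
  have h := trace_Qmat_mul_Phi T ρ
  rw [sum_Phi T (by omega) ρ] at h
  refine ⟨h, ?_⟩
  have h2 : (2 : ℝ) ≤ T := by exact_mod_cast hT
  have hT0 : (T : ℝ) ≠ 0 := by linarith
  have hT1 : (T : ℝ) - 1 ≠ 0 := by linarith
  rw [h, (hasDerivAt_xi T ρ).deriv]
  field_simp
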